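/- Consider problem min_z Σ_{i=1}^n f_i(z) on a real Hilbert space H with each f_i convex, and suppose the projective splitting algorithm is run forever without termination: for every k ≥ 1 there are iterates z^k, w_i^k (i=1,…,n−1, with w_n^k = −Σ_{i=1}^{n−1} w_i^k), x_i^k, y_i^k, stepsizes ρ_i^k, errors e_i^k, and relaxations β_k ∈ [β̲, β̄] with 0 < β̲ ≤ β̄ < 2, such that: {1,…,n} is partitioned into disjoint sets B and F; for i ∈ B, y_i^k is a subgradient of f_i at x_i^k, x_i^k + ρ_i^k y_i^k = z^k + ρ_i^k w_i^k + e_i^k, and for some σ ∈ [0,1), δ ≥ 0: ⟨z^k − x_i^k, e_i^k⟩ ≥ −σ‖z^k − x_i^k‖², ⟨e_i^k, y_i^k − w_i^k⟩ ≤ ρ_i^k σ‖y_i^k − w_i^k‖², ‖e_i^k‖² ≤ δ‖z^k − x_i^k‖²; for i ∈ F, f_i is differentiable with L_i-Lipschitz gradient, x_i^k = z^k − ρ_i^k(∇f_i(z^k) − w_i^k), and y_i^k = ∇f_i(x_i^k); the stepsizes satisfy ρ_i^k ≥ ρ̲ > 0 for all i, ρ_i^k ≤ ρ̄ < ∞ for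 i ∈ B, and ρ_i^k ≤ ρ̄_i < 1/L_i for i ∈ F; the gradient g_k = (γ⁻¹ Σ_{i=1}^n y_i^k, x_1^k − x_n^k, …, x_{n−1}^k − x_n^k) of the separator function φ_k built from (x_i^k, y_i^k) is nonzero; and with α_k = β_k φ_k(p^k)/‖g_k‖_γ² (where p^k = (z^k, w_1^k,…,w_{n−1}^k)), the updates are z^{k+1} = z^k − γ⁻¹ α_k Σ_{i=1}^n y_i^k and w_i^{k+1} = w_i^k − α_k (x_i^k − x_n^k) for i = 1,…,n−1. Suppose there exists (z*, w_1*, …, w_{n−1}*) ∈ Hⁿ with w_i* a subgradient of f_i at z* (i = 1,…,n−1) and −(w_1*+⋯+w_{n−1}*) a subgradient of fₙ at z*. Then there exists a constant C ≥ 0, independent of k, such that for all k ≥ 1 the ergodic iterates x̄_i^k = (Σ_{t=1}^k α_t x_i^t)/(Σ_{t=1}^k α_t) satisfy Σ_{i=1}^n f_i(x̄_i^k) − Σ_{i=1}^n f_i(z*) ≤ C/k. -/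

import Mathlib

open scoped RealInnerProductSpace

/-- `y` is a subgradient of `f : H → ℝ ∪ {+∞}` at `x`: `f x` is finite and
`f u ≥ f x + ⟪y, u − x⟫` for all `u`. -/
def IsSubgradient {H : Type*} [NormedAddCommGroup H] [InnerProductSpace ℝ H]
    (f : H → WithTop ℝ) (x y : H) : Prop :=
  f x ≠ ⊤ ∧ ∀ u, f x + ((⟪y, u - x⟫ : ℝ) : WithTop ℝ) ≤ f u

/-!
A finite convex combination does not increase a convex function, and a subgradient bounds
`fᵢ(xᵢᵗ)` by `fᵢ(u) - ⟪yᵢᵗ, u - xᵢᵗ⟫`. Summing over `i`, the error at step `t` is at most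
`-φₜ(u, 0)`, the separator at the point with zero dual part. Since `φₜ` is affine and the iteration
is a relaxed projection onto a half-space cut out by `φₜ`, expanding the square
`‖pᵗ⁺¹ - (u, 0)‖_γ²` bounds `-2 αₜ φₜ(u, 0)` by the decrease of `‖pᵗ - (u, 0)‖_γ²`, so the weighted
errors telescope. The rate follows because `αₜ` is bounded below: each block step makes
`⟪z - xᵢ, yᵢ - wᵢ⟫` dominate `‖z - xᵢ‖² + ‖yᵢ - wᵢ‖²`, and the sum of the latter dominates the
squared norm of the gradient of `φₜ`.
-/

section Convex

variable {E : Type*} [AddCommGroup E] [Module ℝ E]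

lemma convex_epigraph_withTop {f : E → WithTop ℝ}
    (hf : ∀ a b : ℝ, ∀ u v : E, 0 < a → 0 < b → a + b = 1 →
      f (a • u + b • v) ≤ (a : WithTop ℝ) * f u + (b : WithTop ℝ) * f v) :
    Convex ℝ {p : E × ℝ | f p.1 ≤ (p.2 : WithTop ℝ)} := by
  rw [convex_iff_forall_pos]
  rintro ⟨u, r⟩ hu ⟨v, s⟩ hv a b ha hb hab
  change f u ≤ r at hu
  change f v ≤ s at hv
  obtain ⟨r', hr⟩ := WithTop.ne_top_iff_exists.mp (ne_top_of_le_ne_top WithTop.coe_ne_top hu)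
  obtain ⟨s', hs⟩ := WithTop.ne_top_iff_exists.mp (ne_top_of_le_ne_top WithTop.coe_ne_top hv)
  rw [← hr, WithTop.coe_le_coe] at hu
  rw [← hs, WithTop.coe_le_coe] at hv
  refine (hf a b u v ha hb hab).trans ?_
  rw [← hr, ← hs]
  have : a * r' + b * s' ≤ a * r + b * s := by gcongr
  exact_mod_cast this

lemma map_centerMass_le_of_convex_epigraph {ι : Type*} {f : E → WithTop ℝ}
    (hf : Convex ℝ {p : E × ℝ | f p.1 ≤ (p.2 : WithTop ℝ)}) {s : Finset ι} {α b : ι → ℝ}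
    {x : ι → E} (hα : ∀ t ∈ s, 0 ≤ α t) (hs : 0 < ∑ t ∈ s, α t) (hb : ∀ t ∈ s, f (x t) ≤ b t) :
    f (s.centerMass α x) ≤ (s.centerMass α b : ℝ) := by
  have hmem := hf.centerMass_mem (z := fun t => (x t, b t)) hα hs hb
  simpa [Finset.centerMass, Prod.fst_sum, Prod.snd_sum] using hmem

end Convex

lemma centerMass_Icc_le_div {α d V : ℕ → ℝ} {a : ℝ} (ha : 0 < a) (hα : ∀ t, 1 ≤ t → a ≤ α t)
    (hV : ∀ t, 0 ≤ V t) (hd : ∀ t, 1 ≤ t → α t * d t ≤ V t - V (t + 1)) {k : ℕ} (hk : 1 ≤ k) :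
    (Finset.Icc 1 k).centerMass α d ≤ V 1 / (a * k) := by
  have hsum : a * k ≤ ∑ t ∈ Finset.Icc 1 k, α t := by
    simpa [mul_comm] using Finset.card_nsmul_le_sum (Finset.Icc 1 k) α a
      fun t ht => hα t (Finset.mem_Icc.mp ht).1
  have htelescope : ∑ t ∈ Finset.Icc 1 k, (V t - V (t + 1)) = V 1 - V (k + 1) := by
    have h := Finset.sum_Icc_sub hk V
    rw [← neg_sub (V (k + 1)), ← h, ← Finset.sum_neg_distrib]
    simp only [neg_sub]
  have hweighted : ∑ t ∈ Finset.Icc 1 k, α t * d t ≤ V 1 := by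
    have h := Finset.sum_le_sum fun t (ht : t ∈ Finset.Icc 1 k) => hd t (Finset.mem_Icc.mp ht).1
    linarith [hV (k + 1)]
  have hak : 0 < a * k := by positivity
  simp only [Finset.centerMass, smul_eq_mul]
  rw [inv_mul_eq_div]
  exact div_le_div₀ (hV 1) hweighted hak hsum

lemma exists_pos_forall_mul_le {ι κ : Type*} [Finite ι] [Nonempty ι] {s : Set κ}
    {a b : κ → ι → ℝ} (ha : ∀ k i, 0 ≤ a k i)
    (h : ∀ i, ∃ c : ℝ, 0 < c ∧ ∀ k ∈ s, c * a k i ≤ b k i) :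
    ∃ c : ℝ, 0 < c ∧ ∀ k ∈ s, ∀ i, c * a k i ≤ b k i := by
  choose c hc hle using h
  obtain ⟨j, hj⟩ := Finite.exists_min c
  exact ⟨c j, hc j, fun k hk i =>
    (mul_le_mul_of_nonneg_right (hj i) (ha k i)).trans (hle i k hk)⟩

section ProjectiveSplitting

variable {H : Type*} [NormedAddCommGroup H] [InnerProductSpace ℝ H]

lemma IsSubgradient.map_centerMass_le {ι : Type*} {f : H → WithTop ℝ}
    (hf : Convex ℝ {p : H × ℝ | f p.1 ≤ (p.2 : WithTop ℝ)}) {s : Finset ι} {α : ι → ℝ}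
    {x y : ι → H} (hα : ∀ t ∈ s, 0 ≤ α t) (hs : 0 < ∑ t ∈ s, α t)
    (hsub : ∀ t ∈ s, IsSubgradient f (x t) (y t)) (u : H) :
    f (s.centerMass α x) ≤
      f u + (s.centerMass α fun t => -⟪y t, u - x t⟫ : ℝ) := by
  rcases eq_or_ne (f u) ⊤ with hu | hu
  · simp [hu]
  obtain ⟨r, hr⟩ := WithTop.ne_top_iff_exists.mp hu
  have hvalue : ∀ t ∈ s, f (x t) ≤ (r + -⟪y t, u - x t⟫ : ℝ) := by
    intro t ht
    obtain ⟨q, hq⟩ := WithTop.ne_top_iff_exists.mp (hsub t ht).1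
    have h := (hsub t ht).2 u
    rw [← hq, ← hr] at h
    rw [← hq]
    norm_cast at h ⊢
    linarith
  have hJensen := map_centerMass_le_of_convex_epigraph hf hα hs hvalue
  have hsplit : (s.centerMass α fun t => r + -⟪y t, u - x t⟫) =
      r + s.centerMass α fun t => -⟪y t, u - x t⟫ := by
    simp only [Finset.centerMass, smul_add, Finset.sum_add_distrib, ← Finset.sum_smul]
    rw [inv_smul_smul₀ hs.ne']
  rw [hsplit] at hJensen
  rw [← hr]
  exact_mod_cast hJensen

section Separator

variable {m : ℕ} {E : Type*} [SeminormedAddCommGroup E]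

/-- The dual variables `(w₁, …, wₙ)` of `n = m + 1` blocks, with `wₙ = -(w₁ + ⋯ + wₙ₋₁)` stored
in the last slot. -/
def dualCompletion (w : Fin m → E) : Fin (m + 1) → E := Fin.snoc w (-∑ i, w i)

/-- The separator `φ(z, w)` of the points `(xᵢ, yᵢ)`, with `n = m + 1` and the `n`-th point at
`Fin.last m`. -/
def separator (x y : Fin (m + 1) → H) (z : H) (w : Fin m → H) : ℝ :=
  (∑ i : Fin m, ⟪z - x i.castSucc, y i.castSucc - w i⟫)
    + ⟪z - x (Fin.last m), y (Fin.last m) + ∑ i : Fin m, w i⟫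

/-- The squared norm `‖∇φ‖_γ²` of the gradient `(γ⁻¹ ∑ yᵢ, x₁ - xₙ, …, xₙ₋₁ - xₙ)` of the separator;
the weight `γ` on the first component turns `γ⁻²` into `γ⁻¹`. -/
noncomputable def separatorGradNormSq (γ : ℝ) (x y : Fin (m + 1) → E) : ℝ :=
  (1 / γ) * ‖∑ i, y i‖ ^ 2 + ∑ i : Fin m, ‖x i.castSucc - x (Fin.last m)‖ ^ 2

/-- The squared norm `‖(z, w)‖_γ²` on the space of primal-dual points. -/
def weightedNormSq {ι : Type*} [Fintype ι] (γ : ℝ) (z : E) (w : ι → E) : ℝ :=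
  γ * ‖z‖ ^ 2 + ∑ i, ‖w i‖ ^ 2

lemma weightedNormSq_nonneg {ι : Type*} [Fintype ι] {γ : ℝ} (hγ : 0 ≤ γ) (z : E) (w : ι → E) :
    0 ≤ weightedNormSq γ z w := by
  unfold weightedNormSq
  positivity

lemma sum_dualCompletion (w : Fin m → E) : ∑ i, dualCompletion w i = 0 := by
  simp [dualCompletion, Fin.sum_univ_castSucc]

lemma separator_eq_sum_inner (x y : Fin (m + 1) → H) (z : H) (w : Fin m → H) :
    separator x y z w = ∑ i, ⟪z - x i, y i - dualCompletion w i⟫ := by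
  simp [separator, dualCompletion, Fin.sum_univ_castSucc]

lemma separator_zero_right (x y : Fin (m + 1) → H) (u : H) :
    separator x y u 0 = ∑ i, ⟪y i, u - x i⟫ := by
  simp [separator, Fin.sum_univ_castSucc, real_inner_comm]

lemma separator_sub_separator (x y : Fin (m + 1) → H) (z z' : H) (w w' : Fin m → H) :
    separator x y z w - separator x y z' w' =
      ⟪∑ i, y i, z - z'⟫ + ∑ i : Fin m, ⟪x i.castSucc - x (Fin.last m), w i - w' i⟫ := by
  rw [real_inner_comm]
  simp only [separator, Fin.sum_univ_castSucc, inner_add_right, inner_sub_left, inner_sub_right,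
    inner_sum, Finset.sum_sub_distrib]
  ring

lemma weightedNormSq_sub_smul {ι : Type*} [Fintype ι] {γ : ℝ} (hγ : γ ≠ 0) (z Y : H)
    (w d : ι → H) (α : ℝ) :
    weightedNormSq γ (z - ((1 / γ) * α) • Y) (w - α • d) =
      weightedNormSq γ z w - 2 * α * (⟪Y, z⟫ + ∑ i, ⟪d i, w i⟫)
        + α ^ 2 * ((1 / γ) * ‖Y‖ ^ 2 + ∑ i, ‖d i‖ ^ 2) := by
  have hsq : ∀ (c : ℝ) (v g : H), ‖v - c • g‖ ^ 2 = ‖v‖ ^ 2 - 2 * c * ⟪g, v⟫ + c ^ 2 * ‖g‖ ^ 2 := by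
    intro c v g
    rw [norm_sub_sq_real, norm_smul, inner_smul_right, mul_pow, Real.norm_eq_abs, sq_abs,
      real_inner_comm]
    ring
  simp only [weightedNormSq, Pi.sub_apply, Pi.smul_apply, hsq, Finset.sum_add_distrib,
    Finset.sum_sub_distrib, ← Finset.mul_sum]
  field_simp
  ring

lemma weightedNormSq_relaxed_projection {γ α β : ℝ} (hγ : γ ≠ 0) (x y : Fin (m + 1) → H)
    (z z' : H) (w w' : Fin m → H)
    (hα : α * separatorGradNormSq γ x y = β * separator x y z w) :
    weightedNormSq γ (z - ((1 / γ) * α) • (∑ i, y i) - z')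
        (w - α • (fun i : Fin m => x i.castSucc - x (Fin.last m)) - w') =
      weightedNormSq γ (z - z') (w - w') - α * (2 - β) * separator x y z w
        + 2 * α * separator x y z' w' := by
  rw [sub_right_comm z, sub_right_comm w, weightedNormSq_sub_smul hγ]
  simp only [Pi.sub_apply]
  rw [← separator_sub_separator, ← separatorGradNormSq]
  linear_combination α * hα

lemma mul_neg_separator_le_weightedNormSq_sub {γ α β : ℝ} (hγ : γ ≠ 0)
    {x y : Fin (m + 1) → H} {z : H} {w : Fin m → H} (hα : 0 ≤ α) (hβ : β ≤ 2)
    (hφ : 0 ≤ separator x y z w)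
    (hstep : α * separatorGradNormSq γ x y = β * separator x y z w) (z' : H) (w' : Fin m → H) :
    α * -separator x y z' w' ≤ weightedNormSq γ (z - z') (w - w') / 2 -
      weightedNormSq γ (z - ((1 / γ) * α) • (∑ i, y i) - z')
        (w - α • (fun i : Fin m => x i.castSucc - x (Fin.last m)) - w') / 2 := by
  rw [weightedNormSq_relaxed_projection hγ x y z z' w w' hstep]
  have hdecrease : 0 ≤ α * (2 - β) * separator x y z w :=
    mul_nonneg (mul_nonneg hα (sub_nonneg.mpr hβ)) hφ
  linarith

lemma norm_sum_sq_le_card_mul_sum_norm_sq {ι : Type*} (s : Finset ι)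
    (v : ι → E) : ‖∑ i ∈ s, v i‖ ^ 2 ≤ s.card * ∑ i ∈ s, ‖v i‖ ^ 2 :=
  (pow_le_pow_left₀ (norm_nonneg _) (norm_sum_le s v) 2).trans sq_sum_le_card_mul_sum_sq

lemma sum_norm_sub_last_sq_le (x : Fin (m + 1) → E) (z : E) :
    ∑ i : Fin m, ‖x i.castSucc - x (Fin.last m)‖ ^ 2 ≤ 2 * m * ∑ i, ‖z - x i‖ ^ 2 := by
  have hterm : ∀ i : Fin m, ‖x i.castSucc - x (Fin.last m)‖ ^ 2 ≤ 2 * ∑ j, ‖z - x j‖ ^ 2 := by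
    intro i
    calc ‖x i.castSucc - x (Fin.last m)‖ ^ 2
        ≤ (‖z - x i.castSucc‖ + ‖z - x (Fin.last m)‖) ^ 2 := by
          gcongr
          rw [norm_sub_rev z (x i.castSucc)]
          exact norm_sub_le_norm_sub_add_norm_sub _ _ _
      _ ≤ 2 * (‖z - x i.castSucc‖ ^ 2 + ‖z - x (Fin.last m)‖ ^ 2) := add_sq_le
      _ ≤ 2 * ∑ j, ‖z - x j‖ ^ 2 := by
          rw [Fin.sum_univ_castSucc]
          gcongr
          exact Finset.single_le_sum (f := fun j : Fin m => ‖z - x j.castSucc‖ ^ 2)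
            (fun _ _ => sq_nonneg _) (Finset.mem_univ i)
  calc ∑ i : Fin m, ‖x i.castSucc - x (Fin.last m)‖ ^ 2
      ≤ ∑ _i : Fin m, 2 * ∑ j, ‖z - x j‖ ^ 2 := Finset.sum_le_sum fun i _ => hterm i
    _ = 2 * m * ∑ i, ‖z - x i‖ ^ 2 := by simp; ring

lemma separatorGradNormSq_le {γ : ℝ} (hγ : 0 < γ) (x y : Fin (m + 1) → E) (z : E)
    (w : Fin m → E) :
    separatorGradNormSq γ x y ≤ ((m + 1) / γ + 2 * m) *
      ∑ i, (‖z - x i‖ ^ 2 + ‖y i - dualCompletion w i‖ ^ 2) := by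
  have hy : ‖∑ i, y i‖ ^ 2 ≤ (m + 1) * ∑ i, ‖y i - dualCompletion w i‖ ^ 2 := by
    simpa [Finset.sum_sub_distrib, sum_dualCompletion] using
      norm_sum_sq_le_card_mul_sum_norm_sq Finset.univ fun i => y i - dualCompletion w i
  calc separatorGradNormSq γ x y
      ≤ (1 / γ) * ((m + 1) * ∑ i, ‖y i - dualCompletion w i‖ ^ 2)
          + 2 * m * ∑ i, ‖z - x i‖ ^ 2 := by
        unfold separatorGradNormSq
        gcongr
        exact sum_norm_sub_last_sq_le x z
    _ = (m + 1) / γ * ∑ i, ‖y i - dualCompletion w i‖ ^ 2 + 2 * m * ∑ i, ‖z - x i‖ ^ 2 := by ring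
    _ ≤ ((m + 1) / γ + 2 * m) * ∑ i, ‖y i - dualCompletion w i‖ ^ 2
          + ((m + 1) / γ + 2 * m) * ∑ i, ‖z - x i‖ ^ 2 := by
        gcongr
        · exact le_add_of_nonneg_right (by positivity)
        · exact le_add_of_nonneg_left (by positivity)
    _ = _ := by rw [Finset.sum_add_distrib]; ring

lemma mul_separatorGradNormSq_le_separator {γ c : ℝ} (hγ : 0 < γ) (hc : 0 ≤ c)
    {x y : Fin (m + 1) → H} {z : H} {w : Fin m → H}
    (h : ∀ i, c * (‖z - x i‖ ^ 2 + ‖y i - dualCompletion w i‖ ^ 2) ≤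
      ⟪z - x i, y i - dualCompletion w i⟫) :
    c / ((m + 1) / γ + 2 * m) * separatorGradNormSq γ x y ≤ separator x y z w := by
  have hM : 0 < (m + 1) / γ + 2 * m := by positivity
  calc c / ((m + 1) / γ + 2 * m) * separatorGradNormSq γ x y
      ≤ c / ((m + 1) / γ + 2 * m) * (((m + 1) / γ + 2 * m) *
          ∑ i, (‖z - x i‖ ^ 2 + ‖y i - dualCompletion w i‖ ^ 2)) := by
        gcongr
        exact separatorGradNormSq_le hγ x y z w
    _ = ∑ i, c * (‖z - x i‖ ^ 2 + ‖y i - dualCompletion w i‖ ^ 2) := by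
        rw [← mul_assoc, div_mul_cancel₀ _ hM.ne', Finset.mul_sum]
    _ ≤ separator x y z w := by
        rw [separator_eq_sum_inner]
        exact Finset.sum_le_sum fun i _ => h i

lemma sum_map_centerMass_le_separator {ι : Type*} {f : Fin (m + 1) → H → WithTop ℝ}
    (hf : ∀ i, Convex ℝ {p : H × ℝ | f i p.1 ≤ (p.2 : WithTop ℝ)}) {s : Finset ι} {α : ι → ℝ}
    {x y : ι → Fin (m + 1) → H} (hα : ∀ t ∈ s, 0 ≤ α t) (hs : 0 < ∑ t ∈ s, α t)
    (hsub : ∀ t ∈ s, ∀ i, IsSubgradient (f i) (x t i) (y t i)) (u : H) :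
    ∑ i, f i (s.centerMass α fun t => x t i) ≤
      ∑ i, f i u + (s.centerMass α fun t => -separator (x t) (y t) u 0 : ℝ) := by
  have hcomm : (s.centerMass α fun t => -separator (x t) (y t) u 0) =
      ∑ i, s.centerMass α fun t => -⟪y t i, u - x t i⟫ := by
    simp only [Finset.centerMass, separator_zero_right, ← Finset.sum_neg_distrib,
      Finset.smul_sum]
    exact Finset.sum_comm
  rw [hcomm, WithTop.coe_sum, ← Finset.sum_add_distrib]
  exact Finset.sum_le_sum fun i _ =>
    IsSubgradient.map_centerMass_le (hf i) hα hs (fun t ht => hsub t ht i) u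

lemma sum_map_centerMass_le_of_relaxed_projection {f : Fin (m + 1) → H → WithTop ℝ} {γ a : ℝ}
    (hγ : 0 < γ) (hf : ∀ i, Convex ℝ {p : H × ℝ | f i p.1 ≤ (p.2 : WithTop ℝ)})
    {z : ℕ → H} {w : ℕ → Fin m → H} {x y : ℕ → Fin (m + 1) → H} {α β : ℕ → ℝ}
    (hsub : ∀ t, 1 ≤ t → ∀ i, IsSubgradient (f i) (x t i) (y t i))
    (hφ : ∀ t, 1 ≤ t → 0 ≤ separator (x t) (y t) (z t) (w t)) (hβ : ∀ t, 1 ≤ t → β t ≤ 2)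
    (ha : 0 < a) (hα_ge : ∀ t, 1 ≤ t → a ≤ α t)
    (hα : ∀ t, 1 ≤ t →
      α t * separatorGradNormSq γ (x t) (y t) = β t * separator (x t) (y t) (z t) (w t))
    (hz : ∀ t, 1 ≤ t → z (t + 1) = z t - ((1 / γ) * α t) • ∑ i, y t i)
    (hw : ∀ t, 1 ≤ t → ∀ i, w (t + 1) i = w t i - α t • (x t i.castSucc - x t (Fin.last m)))
    (u : H) {k : ℕ} (hk : 1 ≤ k) :
    ∑ i, f i ((Finset.Icc 1 k).centerMass α fun t => x t i) ≤
      ∑ i, f i u + ((weightedNormSq γ (z 1 - u) (w 1) / 2 / (a * k) : ℝ) : WithTop ℝ) := by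
  have hα_pos : ∀ t ∈ Finset.Icc 1 k, 0 < α t := fun t ht =>
    ha.trans_le (hα_ge t (Finset.mem_Icc.mp ht).1)
  have hdecrease : ∀ t, 1 ≤ t → α t * -separator (x t) (y t) u 0 ≤
      weightedNormSq γ (z t - u) (w t) / 2 - weightedNormSq γ (z (t + 1) - u) (w (t + 1)) / 2 := by
    intro t ht
    have hw' : w (t + 1) = w t - α t • fun i : Fin m => x t i.castSucc - x t (Fin.last m) :=
      funext (hw t ht)
    rw [hz t ht, hw']
    simpa only [sub_zero] using mul_neg_separator_le_weightedNormSq_sub hγ.ne'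
      (ha.le.trans (hα_ge t ht)) (hβ t ht) (hφ t ht) (hα t ht) u 0
  have hmean := centerMass_Icc_le_div ha hα_ge
    (fun t => div_nonneg (weightedNormSq_nonneg hγ.le (z t - u) (w t)) two_pos.le) hdecrease hk
  refine (sum_map_centerMass_le_separator hf (fun t ht => (hα_pos t ht).le)
    (Finset.sum_pos hα_pos (Finset.nonempty_Icc.mpr hk))
    (fun t ht => hsub t (Finset.mem_Icc.mp ht).1) u).trans ?_
  gcongr
  exact WithTop.coe_le_coe.mpr hmean

end Separator

section BlockSteps

/-- A backward step: an inexact proximal step with stepsize `ρ`, dual variable `w` and error `e`,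
under relative error criteria with parameter `σ`. -/
structure IsBackwardStep (f : H → WithTop ℝ) (σ ρ : ℝ) (z w e x y : H) : Prop where
  isSubgradient : IsSubgradient f x y
  eq : x + ρ • y = z + ρ • w + e
  neg_le_inner : -(σ * ‖z - x‖ ^ 2) ≤ ⟪z - x, e⟫
  inner_le : ⟪e, y - w⟫ ≤ ρ * σ * ‖y - w‖ ^ 2

/-- A forward step: a gradient step from `z` with gradient map `g` and stepsize `ρ`, followed by a
second evaluation of `g`. -/
structure IsForwardStep (g : H → H) (ρ : ℝ) (z w x y : H) : Prop where
  eq : x = z - ρ • (g z - w)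
  grad_eq : y = g x

lemma IsBackwardStep.mul_le_inner {f : H → WithTop ℝ} {σ ρ ρlo ρhi : ℝ} {z w e x y : H}
    (h : IsBackwardStep f σ ρ z w e x y) (hσ : σ < 1) (hρlo : 0 < ρlo) (hlo : ρlo ≤ ρ)
    (hhi : ρ ≤ ρhi) :
    (1 - σ) / (ρhi + 1 / ρlo) * (‖z - x‖ ^ 2 + ‖y - w‖ ^ 2) ≤ ⟪z - x, y - w⟫ := by
  have hρ : 0 < ρ := hρlo.trans_le hlo
  have hρhi : 0 < ρhi := hρ.trans_le hhi
  have hstep : ρ • (y - w) = z - x + e := by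
    linear_combination (norm := module) h.eq
  have hdual : ρ * ((1 - σ) * ‖y - w‖ ^ 2) ≤ ⟪z - x, y - w⟫ := by
    have hzx : z - x = ρ • (y - w) - e := eq_sub_of_add_eq hstep.symm
    rw [hzx, inner_sub_left, real_inner_smul_left, real_inner_self_eq_norm_sq]
    linarith [h.inner_le]
  have hinner : 0 ≤ ⟪z - x, y - w⟫ :=
    le_trans (mul_nonneg hρ.le (mul_nonneg (sub_nonneg.mpr hσ.le) (sq_nonneg _))) hdual
  have hprimal_bound : (1 - σ) * ‖z - x‖ ^ 2 ≤ ρhi * ⟪z - x, y - w⟫ := by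
    calc (1 - σ) * ‖z - x‖ ^ 2 ≤ ρ * ⟪z - x, y - w⟫ := by
          rw [← real_inner_smul_right, hstep, inner_add_right, real_inner_self_eq_norm_sq]
          linarith [h.neg_le_inner]
      _ ≤ ρhi * ⟪z - x, y - w⟫ := by gcongr
  have hdual_bound : (1 - σ) * ‖y - w‖ ^ 2 ≤ 1 / ρlo * ⟪z - x, y - w⟫ := by
    calc (1 - σ) * ‖y - w‖ ^ 2 ≤ 1 / ρ * ⟪z - x, y - w⟫ := by
          rw [one_div, inv_mul_eq_div, le_div_iff₀' hρ]
          exact hdual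
      _ ≤ 1 / ρlo * ⟪z - x, y - w⟫ := by gcongr
  rw [div_mul_eq_mul_div, div_le_iff₀ (by positivity)]
  linarith

lemma IsForwardStep.mul_le_inner {g : H → H} {L ρ ρlo ρbar : ℝ} {z w x y : H}
    (h : IsForwardStep g ρ z w x y) (hg : ‖g z - g x‖ ≤ L * ‖z - x‖) (hρlo : 0 < ρlo)
    (hlo : ρlo ≤ ρ) (hbar : ρ ≤ ρbar) (hL : ρbar * L < 1) :
    (1 / ρbar - L) / (1 + (1 / ρlo + L) ^ 2) * (‖z - x‖ ^ 2 + ‖y - w‖ ^ 2) ≤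
      ⟪z - x, y - w⟫ := by
  have hρ : 0 < ρ := hρlo.trans_le hlo
  have hρbar : 0 < ρbar := hρ.trans_le hbar
  have hgap : 0 < 1 / ρbar - L := by
    rw [sub_pos, lt_div_iff₀' hρbar]
    exact hL
  have hyw : y - w = (1 / ρ) • (z - x) - (g z - g x) := by
    have hgw : g z - w = (1 / ρ) • (z - x) := by
      rw [h.eq, sub_sub_cancel, smul_smul, one_div_mul_cancel hρ.ne', one_smul]
    rw [← hgw, h.grad_eq, sub_sub_sub_cancel_left]
  have hprimal : (1 / ρbar - L) * ‖z - x‖ ^ 2 ≤ ⟪z - x, y - w⟫ := by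
    have hCS : ⟪z - x, g z - g x⟫ ≤ L * ‖z - x‖ ^ 2 :=
      calc ⟪z - x, g z - g x⟫ ≤ ‖z - x‖ * ‖g z - g x‖ := real_inner_le_norm _ _
        _ ≤ ‖z - x‖ * (L * ‖z - x‖) := by gcongr
        _ = L * ‖z - x‖ ^ 2 := by ring
    have hρ_inv : 1 / ρbar * ‖z - x‖ ^ 2 ≤ 1 / ρ * ‖z - x‖ ^ 2 := by gcongr
    rw [hyw, inner_sub_right, real_inner_smul_right, real_inner_self_eq_norm_sq]
    linarith
  have hdual : ‖y - w‖ ^ 2 ≤ (1 / ρlo + L) ^ 2 * ‖z - x‖ ^ 2 := by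
    rw [← mul_pow]
    refine pow_le_pow_left₀ (norm_nonneg _) ?_ 2
    calc ‖y - w‖ ≤ ‖(1 / ρ) • (z - x)‖ + ‖g z - g x‖ := hyw ▸ norm_sub_le _ _
      _ ≤ 1 / ρlo * ‖z - x‖ + L * ‖z - x‖ := by
          rw [norm_smul, Real.norm_of_nonneg (by positivity)]
          gcongr
      _ = (1 / ρlo + L) * ‖z - x‖ := by ring
  calc (1 / ρbar - L) / (1 + (1 / ρlo + L) ^ 2) * (‖z - x‖ ^ 2 + ‖y - w‖ ^ 2)
      ≤ (1 / ρbar - L) / (1 + (1 / ρlo + L) ^ 2) *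
          (‖z - x‖ ^ 2 + (1 / ρlo + L) ^ 2 * ‖z - x‖ ^ 2) := by gcongr
    _ = (1 / ρbar - L) * ‖z - x‖ ^ 2 := by field_simp
    _ ≤ ⟪z - x, y - w⟫ := hprimal

lemma exists_pos_block_coercivity {ι κ : Type*} [Finite ι] [Nonempty ι] {s : Set κ}
    {B F : Finset ι} (hBF : ∀ i, i ∈ B ∨ i ∈ F) {f : ι → H → WithTop ℝ} {gf : ι → H → H} {L : ι → ℝ}
    (hLip : ∀ i ∈ F, ∀ u v : H, ‖gf i u - gf i v‖ ≤ L i * ‖u - v‖)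
    {z : κ → H} {w e x y : κ → ι → H} {ρ : κ → ι → ℝ} {σ ρlo ρhi : ℝ} {ρbar : ι → ℝ}
    (hσ : σ < 1) (hρlo : 0 < ρlo) (hρge : ∀ k ∈ s, ∀ i, ρlo ≤ ρ k i)
    (hρB : ∀ k ∈ s, ∀ i ∈ B, ρ k i ≤ ρhi)
    (hρF : ∀ k ∈ s, ∀ i ∈ F, ρ k i ≤ ρbar i ∧ ρbar i * L i < 1)
    (hback : ∀ k ∈ s, ∀ i ∈ B,
      IsBackwardStep (f i) σ (ρ k i) (z k) (w k i) (e k i) (x k i) (y k i))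
    (hforw : ∀ k ∈ s, ∀ i ∈ F, IsForwardStep (gf i) (ρ k i) (z k) (w k i) (x k i) (y k i)) :
    ∃ c : ℝ, 0 < c ∧ ∀ k ∈ s, ∀ i,
      c * (‖z k - x k i‖ ^ 2 + ‖y k i - w k i‖ ^ 2) ≤ ⟪z k - x k i, y k i - w k i⟫ := by
  refine exists_pos_forall_mul_le (fun _ _ => by positivity) fun i => ?_
  rcases s.eq_empty_or_nonempty with rfl | ⟨k₀, hk₀⟩
  · exact ⟨1, one_pos, by simp⟩
  have hρ₀ : 0 < ρ k₀ i := hρlo.trans_le (hρge k₀ hk₀ i)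
  rcases hBF i with hi | hi
  · have hρhi : 0 < ρhi := hρ₀.trans_le (hρB k₀ hk₀ i hi)
    exact ⟨(1 - σ) / (ρhi + 1 / ρlo), div_pos (sub_pos.mpr hσ) (by positivity), fun k hk =>
      (hback k hk i hi).mul_le_inner hσ hρlo (hρge k hk i) (hρB k hk i hi)⟩
  · obtain ⟨hρbar_ge, hL⟩ := hρF k₀ hk₀ i hi
    have hgap : 0 < 1 / ρbar i - L i := by
      rw [sub_pos, lt_div_iff₀' (hρ₀.trans_le hρbar_ge)]
      exact hL
    exact ⟨(1 / ρbar i - L i) / (1 + (1 / ρlo + L i) ^ 2), by positivity, fun k hk =>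
      (hforw k hk i hi).mul_le_inner (hLip i hi _ _) hρlo (hρge k hk i) (hρF k hk i hi).1 hL⟩

end BlockSteps

theorem ergodic_function_value_rate_general {m : ℕ} {γ : ℝ} (hγ : 0 < γ)
    {f : Fin (m + 1) → H → WithTop ℝ}
    (hconv : ∀ i, ∀ a b : ℝ, ∀ u v : H, 0 < a → 0 < b → a + b = 1 →
      f i (a • u + b • v) ≤ (a : WithTop ℝ) * f i u + (b : WithTop ℝ) * f i v)
    {B F : Finset (Fin (m + 1))} (hBF : B ∪ F = Finset.univ)
    {gf : Fin (m + 1) → H → H} {L : Fin (m + 1) → ℝ}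
    (hgrad : ∀ i ∈ F, ∀ u : H, IsSubgradient (f i) u (gf i u))
    (hLip : ∀ i ∈ F, ∀ u v : H, ‖gf i u - gf i v‖ ≤ L i * ‖u - v‖)
    {z : ℕ → H} {w : ℕ → Fin m → H} {x y e : ℕ → Fin (m + 1) → H} {ρ : ℕ → Fin (m + 1) → ℝ}
    {σ βlo ρlo ρhi : ℝ} {ρbar : Fin (m + 1) → ℝ} {α β : ℕ → ℝ}
    (hσ : σ < 1) (hβlo : 0 < βlo) (hβ : ∀ k, 1 ≤ k → βlo ≤ β k ∧ β k ≤ 2)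
    (hρlo : 0 < ρlo) (hρge : ∀ k, 1 ≤ k → ∀ i, ρlo ≤ ρ k i)
    (hρB : ∀ k, 1 ≤ k → ∀ i ∈ B, ρ k i ≤ ρhi)
    (hρF : ∀ k, 1 ≤ k → ∀ i ∈ F, ρ k i ≤ ρbar i ∧ ρbar i * L i < 1)
    (hback : ∀ k, 1 ≤ k → ∀ i ∈ B,
      IsBackwardStep (f i) σ (ρ k i) (z k) (dualCompletion (w k) i) (e k i) (x k i) (y k i))
    (hforw : ∀ k, 1 ≤ k → ∀ i ∈ F,
      IsForwardStep (gf i) (ρ k i) (z k) (dualCompletion (w k) i) (x k i) (y k i))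
    (hgrad_pos : ∀ k, 1 ≤ k → 0 < separatorGradNormSq γ (x k) (y k))
    (hα : ∀ k, 1 ≤ k →
      α k = β k * separator (x k) (y k) (z k) (w k) / separatorGradNormSq γ (x k) (y k))
    (hz : ∀ k, 1 ≤ k → z (k + 1) = z k - ((1 / γ) * α k) • ∑ i, y k i)
    (hw : ∀ k, 1 ≤ k → ∀ i, w (k + 1) i = w k i - α k • (x k i.castSucc - x k (Fin.last m))) :
    ∃ C : ℝ, 0 ≤ C ∧ ∀ u : H, ∀ k, 1 ≤ k →
      ∑ i, f i ((Finset.Icc 1 k).centerMass α fun t => x t i) ≤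
        ∑ i, f i u + ((C * weightedNormSq γ (z 1 - u) (w 1) / k : ℝ) : WithTop ℝ) := by
  have hmem : ∀ i, i ∈ B ∨ i ∈ F := fun i => by
    rw [← Finset.mem_union, hBF]
    exact Finset.mem_univ i
  have hsub : ∀ k, 1 ≤ k → ∀ i, IsSubgradient (f i) (x k i) (y k i) := fun k hk i =>
    (hmem i).elim (fun hi => (hback k hk i hi).isSubgradient)
      fun hi => (hforw k hk i hi).grad_eq ▸ hgrad i hi _
  obtain ⟨c, hc, hcoercive⟩ := exists_pos_block_coercivity (s := Set.Ici 1) hmem hLip hσ hρlo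
    hρge hρB hρF hback hforw
  set κ := c / ((m + 1) / γ + 2 * m)
  have hκ : 0 < κ := by positivity
  have hφ : ∀ k, 1 ≤ k →
      κ * separatorGradNormSq γ (x k) (y k) ≤ separator (x k) (y k) (z k) (w k) := fun k hk =>
    mul_separatorGradNormSq_le_separator hγ hc.le (hcoercive k hk)
  have hα_ge : ∀ k, 1 ≤ k → βlo * κ ≤ α k := fun k hk => by
    rw [hα k hk, le_div_iff₀ (hgrad_pos k hk), mul_assoc]
    exact mul_le_mul (hβ k hk).1 (hφ k hk) (mul_pos hκ (hgrad_pos k hk)).le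
      (hβlo.le.trans (hβ k hk).1)
  have ha : 0 < βlo * κ := mul_pos hβlo hκ
  refine ⟨1 / (2 * (βlo * κ)), by positivity, fun u k hk => ?_⟩
  convert sum_map_centerMass_le_of_relaxed_projection hγ
    (fun i => convex_epigraph_withTop (hconv i)) hsub
    (fun t ht => (mul_pos hκ (hgrad_pos t ht)).le.trans (hφ t ht)) (fun t ht => (hβ t ht).2) ha
    hα_ge (fun t ht => (eq_div_iff (hgrad_pos t ht).ne').mp (hα t ht)) hz hw u hk using 3
  field_simp

end ProjectiveSplitting

/-- Ergodic `O(1/k)` function-value convergence rate of projective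
splitting for `min_z Σᵢ fᵢ(z)` with `n = m+1 ≥ 1` convex functions: if the algorithm runs
forever (every separator gradient is nonzero) and the extended solution set is nonempty,
then there is a constant `C ≥ 0` such that the ergodic iterates
`x̄ᵢ^k = (Σ_{t=1}^k α_t xᵢ^t)/(Σ_{t=1}^k α_t)` satisfy
`Σᵢ fᵢ(x̄ᵢ^k) − Σᵢ fᵢ(z*) ≤ C/k` for all `k ≥ 1`. -/
theorem ergodic_function_value_rate
    {H : Type*} [NormedAddCommGroup H] [InnerProductSpace ℝ H] [CompleteSpace H]
    (m : ℕ) (γ : ℝ) (hγ : 0 < γ)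
    (f : Fin (m+1) → H → WithTop ℝ)
    (hconv : ∀ i, ∀ a b : ℝ, ∀ u v : H, 0 < a → 0 < b → a + b = 1 →
      f i (a • u + b • v) ≤ ((a : ℝ) : WithTop ℝ) * f i u + ((b : ℝ) : WithTop ℝ) * f i v)
    (B F : Finset (Fin (m+1))) (hBF : Disjoint B F) (hBFunion : B ∪ F = Finset.univ)
    (gf : Fin (m+1) → H → H) (L : Fin (m+1) → ℝ) (hL0 : ∀ i ∈ F, 0 ≤ L i)
    (hgrad : ∀ i ∈ F, ∀ u : H, IsSubgradient (f i) u (gf i u))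
    (hLip : ∀ i ∈ F, ∀ u v : H, ‖gf i u - gf i v‖ ≤ L i * ‖u - v‖)
    (z : ℕ → H) (w : ℕ → Fin m → H) (wfull : ℕ → Fin (m+1) → H)
    (hwfull : ∀ k, wfull k = Fin.snoc (w k) (-(∑ i : Fin m, w k i)))
    (x y : ℕ → Fin (m+1) → H) (ρ : ℕ → Fin (m+1) → ℝ) (e : ℕ → Fin (m+1) → H)
    (σ δ : ℝ) (hσ0 : 0 ≤ σ) (hσ1 : σ < 1) (hδ : 0 ≤ δ)
    (β : ℕ → ℝ) (βlo βhi : ℝ) (hβlo : 0 < βlo) (hβle : βlo ≤ βhi) (hβhi : βhi < 2)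
    (hβ : ∀ k, 1 ≤ k → βlo ≤ β k ∧ β k ≤ βhi)
    (ρlo ρhi : ℝ) (ρbar : Fin (m+1) → ℝ) (hρlo : 0 < ρlo)
    (hρge : ∀ k, 1 ≤ k → ∀ i, ρlo ≤ ρ k i)
    (hρB : ∀ k, 1 ≤ k → ∀ i ∈ B, ρ k i ≤ ρhi)
    (hρF : ∀ k, 1 ≤ k → ∀ i ∈ F, ρ k i ≤ ρbar i ∧ ρbar i * L i < 1)
    (hback : ∀ k, 1 ≤ k → ∀ i ∈ B, IsSubgradient (f i) (x k i) (y k i) ∧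
      x k i + ρ k i • y k i = z k + ρ k i • wfull k i + e k i)
    (hforw : ∀ k, 1 ≤ k → ∀ i ∈ F,
      x k i = z k - ρ k i • (gf i (z k) - wfull k i) ∧ y k i = gf i (x k i))
    (herr1 : ∀ k, 1 ≤ k → ∀ i ∈ B, -(σ * ‖z k - x k i‖ ^ 2) ≤ ⟪z k - x k i, e k i⟫)
    (herr2 : ∀ k, 1 ≤ k → ∀ i ∈ B,
      ⟪e k i, y k i - wfull k i⟫ ≤ ρ k i * σ * ‖y k i - wfull k i‖ ^ 2)
    (herr3 : ∀ k, 1 ≤ k → ∀ i ∈ B, ‖e k i‖ ^ 2 ≤ δ * ‖z k - x k i‖ ^ 2)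
    (π φval α : ℕ → ℝ)
    (hπ : ∀ k, 1 ≤ k → π k = (1 / γ) * ‖∑ i : Fin (m+1), y k i‖ ^ 2
      + ∑ i : Fin m, ‖x k i.castSucc - x k (Fin.last m)‖ ^ 2)
    (hπpos : ∀ k, 1 ≤ k → 0 < π k)
    (hφval : ∀ k, 1 ≤ k →
      φval k = (∑ i : Fin m, ⟪z k - x k i.castSucc, y k i.castSucc - w k i⟫)
        + ⟪z k - x k (Fin.last m), y k (Fin.last m) + ∑ i : Fin m, w k i⟫)
    (hα : ∀ k, 1 ≤ k → α k = β k * φval k / π k)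
    (hzupd : ∀ k, 1 ≤ k → z (k+1) = z k - ((1 / γ) * α k) • (∑ i : Fin (m+1), y k i))
    (hwupd : ∀ k, 1 ≤ k → ∀ i : Fin m,
      w (k+1) i = w k i - α k • (x k i.castSucc - x k (Fin.last m)))
    (zstar : H) (wstar : Fin m → H)
    (hws : ∀ i : Fin m, IsSubgradient (f i.castSucc) zstar (wstar i))
    (hwsn : IsSubgradient (f (Fin.last m)) zstar (-(∑ i : Fin m, wstar i))) :
    ∃ C : ℝ, 0 ≤ C ∧ ∀ k, 1 ≤ k →
      (∑ i : Fin (m+1),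
          f i ((∑ t ∈ Finset.Icc 1 k, α t)⁻¹ • ∑ t ∈ Finset.Icc 1 k, α t • x t i))
        ≤ (∑ i : Fin (m+1), f i zstar) + (((C / k : ℝ)) : WithTop ℝ) := by
  obtain rfl : wfull = fun k => dualCompletion (w k) := funext hwfull
  obtain ⟨C, hC, h⟩ := ergodic_function_value_rate_general hγ hconv hBFunion hgrad hLip hσ1 hβlo
    (fun k hk => ⟨(hβ k hk).1, (hβ k hk).2.trans hβhi.le⟩) hρlo hρge hρB hρF
    (fun k hk i hi => ⟨(hback k hk i hi).1, (hback k hk i hi).2, herr1 k hk i hi, herr2 k hk i hi⟩)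
    (fun k hk i hi => ⟨(hforw k hk i hi).1, (hforw k hk i hi).2⟩)
    (fun k hk => (hπpos k hk).trans_eq (hπ k hk))
    (fun k hk => by rw [hα k hk, hφval k hk, hπ k hk]; rfl) hzupd hwupd
  exact ⟨C * weightedNormSq γ (z 1 - zstar) (w 1),
    mul_nonneg hC (weightedNormSq_nonneg hγ.le _ _), h zstar⟩
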